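/- Second-moment bound for the Monte Carlo path estimator (Eq. (19)–(21) in the proof of Lemma 2.2): Let N ≥ 1, L ≥ 1. Let Φ : Fin N → ℂ satisfy ∑_x |Φ(x)|² = 1 and Φ(x) ≠ 0 for all x. For each l ∈ {1,…,L} let G_l be a real symmetric N×N matrix with nonnegative entries, let φ_l : Fin N → ℝ be entrywise strictly positive, and let λ_l satisfy 0 < λ_l ≤ 1 and G_l φ_l = λ_l φ_l. For a path x⃗ = (x_0,…,x_L) ∈ (Fin N)^{L+1} define Π(x⃗) = |Φ(x_0)|² ∏_{l=1}^L [G_l(x_{l−1},x_l) φ_l(x_l) / (λ_l φ_l(x_{l−1}))] and R(x⃗) = (Φ(x_L)/Φ(x_0)) ∏_{l=1}^L [λ_l φ_l(x_{l−1})/φ_l(x_l)]. Then ∑_{x⃗} Π(x⃗) |R(x⃗)|² ≤ 1. -/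

import Mathlib

open scoped BigOperators
open Matrix

/-!
Write `P_l(x, y) = G_l(x, y) φ_l(y) / (λ_l φ_l(x))`, so that `Π` is the law of a chain started from
`|Φ|²` with transitions `P_l`. Multiplying `P_l(x, y)` by the squared factor
`(λ_l φ_l(x) / φ_l(y))²` of `|R|²` gives `λ_l²` times the transition `y → x` of the same kind built
from `G_lᵀ`, and `|Φ(x_0)|²` cancels. Thus `Π |R|²` is `∏ λ_l²` times the weight of the reversed
path started from `|Φ(x_L)|²`; transition probabilities sum to one, so the second moment equals
`∏ λ_l² · ∑ |Φ|²`.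
-/

section DoobTransform

variable {ι K : Type*} [Field K]

/-- The Doob transform of `G` by `φ`: the transition matrix obtained by conjugating `G` with the
diagonal matrix of `φ` and dividing by `lam`. It is stochastic when `φ` is an entrywise positive
eigenvector of the nonnegative matrix `G` with eigenvalue `lam`. -/
def doobTransform (G : Matrix ι ι K) (φ : ι → K) (lam : K) : Matrix ι ι K :=
  of fun x y => G x y * φ y / (lam * φ x)

lemma sum_doobTransform_eq_one [Fintype ι] {G : Matrix ι ι K} {φ : ι → K} {lam : K}
    (hlam : lam ≠ 0) (heig : G *ᵥ φ = lam • φ) {x : ι} (hφ : φ x ≠ 0) :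
    ∑ y, doobTransform G φ lam x y = 1 := by
  have heig_x : ∑ y, G x y * φ y = lam * φ x := congrFun heig x
  simp only [doobTransform, of_apply]
  rw [← Finset.sum_div, heig_x, div_self (mul_ne_zero hlam hφ)]

lemma doobTransform_mul_sq (G : Matrix ι ι K) (φ : ι → K) (lam : K) (x y : ι) :
    doobTransform G φ lam x y * (lam * φ x / φ y) ^ 2 =
      lam ^ 2 * doobTransform Gᵀ φ lam y x := by
  simp only [doobTransform, of_apply, transpose_apply]
  field_simp

end DoobTransform

lemma sum_path_mul_prod_reverse {ι R : Type*} [Fintype ι] [CommSemiring R] (f : ι → R) {L : ℕ}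
    {P : Fin L → Matrix ι ι R} (hP : ∀ l y, ∑ x, P l y x = 1) :
    ∑ xs : Fin (L + 1) → ι, f (xs (Fin.last L)) * ∏ l : Fin L, P l (xs l.succ) (xs l.castSucc) =
      ∑ x, f x := by
  induction L with
  | zero => simp [← (Equiv.funUnique (Fin 1) ι).sum_comp f]
  | succ L ih =>
    -- The initial vertex `x` occurs only in the factor `P 0 (ys 0) x`, which is summed out first.
    have split_initial (x : ι) (ys : Fin (L + 1) → ι) :
        f ((Fin.cons x ys : Fin (L + 2) → ι) (Fin.last (L + 1))) *
            ∏ l : Fin (L + 1), P l ((Fin.cons x ys : Fin (L + 2) → ι) l.succ)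
              ((Fin.cons x ys : Fin (L + 2) → ι) l.castSucc) =
          P 0 (ys 0) x *
            (f (ys (Fin.last L)) * ∏ l : Fin L, P l.succ (ys l.succ) (ys l.castSucc)) := by
      simp only [Fin.prod_univ_succ, Fin.castSucc_zero, Fin.castSucc_succ, Fin.cons_zero,
        Fin.cons_succ, ← Fin.succ_last]
      ring
    rw [← (Fin.consEquiv fun _ : Fin (L + 2) => ι).sum_comp, Fintype.sum_prod_type_right]
    simp only [Fin.consEquiv_apply, split_initial, ← Finset.sum_mul, hP, one_mul]
    exact ih fun l => hP l.succ

section PathEstimator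

variable {ι 𝕜 : Type*} [RCLike 𝕜] {L : ℕ}

/-- The weight `Π` of a path: the product of `|Φ|²` at the initial vertex and of the
Doob-transformed transitions. -/
noncomputable def pathWeight (Φ : ι → 𝕜) (G : Fin L → Matrix ι ι ℝ) (φ : Fin L → ι → ℝ)
    (lam : Fin L → ℝ) (xs : Fin (L + 1) → ι) : ℝ :=
  ‖Φ (xs 0)‖ ^ 2 * ∏ l : Fin L, doobTransform (G l) (φ l) (lam l) (xs l.castSucc) (xs l.succ)

/-- The estimator `R` of a path: the factor by which `Π` has to be reweighted to recover the path's
contribution to `⟨Φ, G_1 ⋯ G_L Φ⟩`. -/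
noncomputable def pathEstimator (Φ : ι → 𝕜) (φ : Fin L → ι → ℝ) (lam : Fin L → ℝ)
    (xs : Fin (L + 1) → ι) : 𝕜 :=
  Φ (xs (Fin.last L)) / Φ (xs 0) *
    (↑(∏ l : Fin L, lam l * φ l (xs l.castSucc) / φ l (xs l.succ)) : 𝕜)

lemma pathWeight_mul_norm_pathEstimator_sq {Φ : ι → 𝕜} (G : Fin L → Matrix ι ι ℝ)
    (φ : Fin L → ι → ℝ) (lam : Fin L → ℝ) {xs : Fin (L + 1) → ι} (hΦ : Φ (xs 0) ≠ 0) :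
    pathWeight Φ G φ lam xs * ‖pathEstimator Φ φ lam xs‖ ^ 2 =
      (∏ l, lam l ^ 2) * (‖Φ (xs (Fin.last L))‖ ^ 2 *
        ∏ l : Fin L, doobTransform (G l)ᵀ (φ l) (lam l) (xs l.succ) (xs l.castSucc)) := by
  have hnorm : ‖Φ (xs 0)‖ ≠ 0 := norm_ne_zero_iff.mpr hΦ
  have norm_estimator_sq : ‖pathEstimator Φ φ lam xs‖ ^ 2 =
      ‖Φ (xs (Fin.last L))‖ ^ 2 / ‖Φ (xs 0)‖ ^ 2 *
        ∏ l : Fin L, (lam l * φ l (xs l.castSucc) / φ l (xs l.succ)) ^ 2 := by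
    rw [pathEstimator, norm_mul, norm_div, RCLike.norm_ofReal, mul_pow, sq_abs, div_pow,
      Finset.prod_pow]
  have prod_reverse :
      (∏ l : Fin L, doobTransform (G l) (φ l) (lam l) (xs l.castSucc) (xs l.succ)) *
          ∏ l : Fin L, (lam l * φ l (xs l.castSucc) / φ l (xs l.succ)) ^ 2 =
        (∏ l, lam l ^ 2) *
          ∏ l : Fin L, doobTransform (G l)ᵀ (φ l) (lam l) (xs l.succ) (xs l.castSucc) := by
    simp only [← Finset.prod_mul_distrib, doobTransform_mul_sq]
  rw [mul_left_comm, ← prod_reverse, norm_estimator_sq, pathWeight]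
  field_simp

theorem mc_path_estimator_second_moment_bound_general [Fintype ι] {Φ : ι → 𝕜}
    (hne : ∀ x, Φ x ≠ 0) {G : Fin L → Matrix ι ι ℝ} {φ : Fin L → ι → ℝ} (hφ : ∀ l x, φ l x ≠ 0)
    {lam : Fin L → ℝ} (hlam : ∀ l, lam l ≠ 0) (heig : ∀ l, φ l ᵥ* G l = lam l • φ l) :
    ∑ xs, pathWeight Φ G φ lam xs * ‖pathEstimator Φ φ lam xs‖ ^ 2 =
      (∏ l, lam l ^ 2) * ∑ x, ‖Φ x‖ ^ 2 := by
  have stochastic_reverse (l : Fin L) (y : ι) :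
      ∑ x, doobTransform (G l)ᵀ (φ l) (lam l) y x = 1 :=
    sum_doobTransform_eq_one (hlam l) ((mulVec_transpose _ _).trans (heig l)) (hφ l y)
  simp only [pathWeight_mul_norm_pathEstimator_sq G φ lam (hne _), ← Finset.mul_sum]
  rw [sum_path_mul_prod_reverse (fun x => ‖Φ x‖ ^ 2) stochastic_reverse]

end PathEstimator

/-- Second-moment bound for the Monte Carlo path estimator
(Eqs. (19)–(21) in the proof of Lemma 2.2). -/
theorem mc_path_estimator_second_moment_bound
    (N L : ℕ) (hN : 1 ≤ N) (hL : 1 ≤ L)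
    (Φ : Fin N → ℂ)
    (hnorm : ∑ x, ‖Φ x‖ ^ 2 = 1)
    (hne : ∀ x, Φ x ≠ 0)
    (G : Fin L → Matrix (Fin N) (Fin N) ℝ)
    (hsymm : ∀ l, (G l).IsSymm)
    (hnonneg : ∀ l x y, 0 ≤ G l x y)
    (φ : Fin L → Fin N → ℝ)
    (hφ : ∀ l x, 0 < φ l x)
    (lam : Fin L → ℝ)
    (hlam : ∀ l, 0 < lam l)
    (hlam1 : ∀ l, lam l ≤ 1)
    (heig : ∀ l, G l *ᵥ φ l = lam l • φ l) :
    ∑ xs : Fin (L + 1) → Fin N,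
        (‖Φ (xs 0)‖ ^ 2 *
            ∏ l : Fin L,
              G l (xs l.castSucc) (xs l.succ) * φ l (xs l.succ) /
                (lam l * φ l (xs l.castSucc))) *
          ‖Φ (xs (Fin.last L)) / Φ (xs 0) *
            (↑(∏ l : Fin L, lam l * φ l (xs l.castSucc) / φ l (xs l.succ)) : ℂ)‖ ^ 2
      ≤ 1 := by
  calc
    _ = (∏ l, lam l ^ 2) * ∑ x, ‖Φ x‖ ^ 2 :=
      mc_path_estimator_second_moment_bound_general hne (fun l x => (hφ l x).ne')
        (fun l => (hlam l).ne') fun l => by rw [← mulVec_transpose, hsymm l, heig l]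
    _ = ∏ l, lam l ^ 2 := by rw [hnorm, mul_one]
    _ ≤ 1 := Finset.prod_le_one (fun l _ => sq_nonneg (lam l))
      fun l _ => pow_le_one₀ (hlam l).le (hlam1 l)
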